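/- Let q be an odd prime power, let d = 5, and let r ∈ F_q^+ (a nonzero quadratic residue). If 𝓔 ⊆ F_q^5 has size at least 12·q^3, then 𝓔 contains a pair of 4-paths with dilation ratio r. -/

import Mathlib

/-!
Write `q = |F|` and `N(x,t)` for the number of `y ∈ 𝓔` with `‖x - y‖ = t`. As `q` is odd, for
`y ≠ y'` the points `x` with `‖x - y‖ = ‖x - y'‖` form a hyperplane, so there are `q⁴` of them
(`card_bisector_le`). Hence the variance of `N` over all `(x,t) ∈ F⁵ × F` satisfies
`∑ (N(x,t) - |𝓔|/q)² ≤ |𝓔| q⁵` (`variance_le`).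

If `t ≠ 0` and the distance-`t` graph on `𝓔` contains no `4`-path, then it has average degree at
most `6`: otherwise, deleting vertices of degree at most `3` leaves a nonempty subgraph of minimum
degree at least `4` (`exists_min_degree`), in which a `4`-path is found greedily (`exists_path`).
Applying Cauchy–Schwarz to `N - |𝓔|/q` on `𝓔 × B`, where `B` is the set of `t` for which the
average degree is at most `6`, and using `|𝓔| ≥ 12 q³`, gives `121 |B| ≤ q` (`card_bad_le`).
Therefore some `t ≠ 0` has both `t ∉ B` and `r t ∉ B`; the `x`-path is taken with all distances
`t` and the `y`-path with all distances `r t`.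
-/

/-- `norm2 x = x₁² + ⋯ + x_d²` for `x ∈ F_q^d`. -/
def norm2 {F : Type*} [Field F] {d : ℕ} (x : Fin d → F) : F := ∑ i, x i ^ 2

/-- `𝓔` contains a pair of `k`-stars with dilation ratio `r`: there are distinct
`x₁, …, x_{k+1} ∈ 𝓔` and distinct `y₁, …, y_{k+1} ∈ 𝓔` with
`‖y_i − y₁‖ = r‖x_i − x₁‖ ≠ 0` for `i = 2, …, k+1`. -/
def ContainsPairOfStars {F : Type*} [Field F] {d : ℕ}
    (𝓔 : Finset (Fin d → F)) (k : ℕ) (r : F) : Prop :=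
  ∃ x y : Fin (k + 1) → (Fin d → F),
    Function.Injective x ∧ Function.Injective y ∧
    (∀ i, x i ∈ 𝓔) ∧ (∀ i, y i ∈ 𝓔) ∧
    ∀ i : Fin (k + 1), i ≠ 0 →
      norm2 (y i - y 0) = r * norm2 (x i - x 0) ∧ r * norm2 (x i - x 0) ≠ 0

/-- `𝓔` contains a pair of `k`-paths with dilation ratio `r`: there are distinct
`x₁, …, x_{k+1} ∈ 𝓔` and distinct `y₁, …, y_{k+1} ∈ 𝓔` with
`‖y_{i+1} − y_i‖ = r‖x_{i+1} − x_i‖ ≠ 0` for `i = 1, …, k`. -/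
def ContainsPairOfPaths {F : Type*} [Field F] {d : ℕ}
    (𝓔 : Finset (Fin d → F)) (k : ℕ) (r : F) : Prop :=
  ∃ x y : Fin (k + 1) → (Fin d → F),
    Function.Injective x ∧ Function.Injective y ∧
    (∀ i, x i ∈ 𝓔) ∧ (∀ i, y i ∈ 𝓔) ∧
    ∀ i : Fin k,
      norm2 (y i.succ - y i.castSucc) = r * norm2 (x i.succ - x i.castSucc) ∧
      r * norm2 (x i.succ - x i.castSucc) ≠ 0

/-- If the degrees of a symmetric relation on `S` sum to more than `6|S|`, some nonempty subset
of `S` has minimum degree at least `4`: deleting a vertex of degree at most `3` lowers the sum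
of the degrees by at most `6`. -/
lemma exists_min_degree {V : Type*} [DecidableEq V] (R : V → V → Prop) [DecidableRel R]
    (hsymm : ∀ a b, R a b → R b a) (n : ℕ) :
    ∀ S : Finset V, S.card = n →
      6 * S.card < ∑ x ∈ S, (S.filter (fun y => R x y)).card →
      ∃ T ⊆ S, T.Nonempty ∧ ∀ x ∈ T, 4 ≤ (T.filter (fun y => R x y)).card := by
  induction n with
  | zero =>
    intro S hS h
    rw [Finset.card_eq_zero] at hS
    subst hS
    simp at h
  | succ n ih =>
    intro S hS h
    by_cases hall : ∀ x ∈ S, 4 ≤ (S.filter (fun y => R x y)).card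
    · exact ⟨S, subset_rfl, Finset.card_pos.mp (by omega), hall⟩
    · push Not at hall
      obtain ⟨a, ha, hdeg⟩ := hall
      have hc : (S.erase a).card = n := by rw [Finset.card_erase_of_mem ha]; omega
      have key : ∑ x ∈ S, (S.filter (fun y => R x y)).card
          ≤ 6 + ∑ x ∈ S.erase a, ((S.erase a).filter (fun y => R x y)).card := by
        rw [← Finset.add_sum_erase S _ ha]
        have h1 : ∀ x ∈ S.erase a, (S.filter (fun y => R x y)).card
            ≤ ((S.erase a).filter (fun y => R x y)).card + (if R a x then 1 else 0) := by
          intro x hx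
          rw [Finset.filter_erase]
          split_ifs with hax
          · have := Finset.pred_card_le_card_erase (s := S.filter (fun y => R x y)) (a := a)
            omega
          · rw [Finset.erase_eq_of_notMem]
            · omega
            · intro hm
              exact hax (hsymm _ _ (Finset.mem_filter.mp hm).2)
        have h2 := Finset.sum_le_sum h1
        rw [Finset.sum_add_distrib, ← Finset.card_filter] at h2
        have h3 : ((S.erase a).filter (fun y => R a y)).card
            ≤ (S.filter (fun y => R a y)).card :=
          Finset.card_le_card (Finset.filter_subset_filter _ (Finset.erase_subset _ _))
        omega
      obtain ⟨T, hT, h'⟩ := ih (S.erase a) hc (by omega)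
      exact ⟨T, hT.trans (Finset.erase_subset _ _), h'⟩

lemma exists_new {V : Type*} [DecidableEq V] (A U : Finset V) (h : U.card < A.card) :
    ∃ v ∈ A, v ∉ U := by
  by_contra! hc
  exact absurd (Finset.card_le_card (show A ⊆ U from hc)) (by omega)

/-- A symmetric irreflexive relation on `S` of average degree more than `6` contains a path
with `4` edges. -/
lemma exists_path {V : Type*} [DecidableEq V] (R : V → V → Prop) [DecidableRel R]
    (hsymm : ∀ a b, R a b → R b a) (hirr : ∀ a, ¬ R a a) (S : Finset V)
    (h : 6 * S.card < ∑ x ∈ S, (S.filter (fun y => R x y)).card) :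
    ∃ x : Fin 5 → V, Function.Injective x ∧ (∀ i, x i ∈ S) ∧
      ∀ i : Fin 4, R (x i.castSucc) (x i.succ) := by
  obtain ⟨T, hTS, ⟨a, ha⟩, hT⟩ := exists_min_degree R hsymm _ S rfl h
  have next : ∀ x ∈ T, ∀ U : Finset V, U.card ≤ 3 → ∃ v ∈ T, R x v ∧ v ∉ U := by
    intro x hx U hU
    obtain ⟨v, hv, hvU⟩ := exists_new _ U (lt_of_le_of_lt hU (hT x hx))
    exact ⟨v, (Finset.mem_filter.mp hv).1, (Finset.mem_filter.mp hv).2, hvU⟩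
  obtain ⟨b, hb, hab, -⟩ := next a ha ∅ (by simp)
  obtain ⟨c, hc, hbc, hcU⟩ := next b hb {a} (by simp)
  obtain ⟨d, hd, hcd, hdU⟩ := next c hc {a, b} (Finset.card_le_two.trans (by norm_num))
  obtain ⟨e, he, hde, heU⟩ := next d hd {a, b, c} Finset.card_le_three
  have n1 : a ≠ b := by rintro rfl; exact hirr _ hab
  have n2 : b ≠ c := by rintro rfl; exact hirr _ hbc
  have n3 : c ≠ d := by rintro rfl; exact hirr _ hcd
  have n4 : d ≠ e := by rintro rfl; exact hirr _ hde
  simp only [Finset.mem_insert, Finset.mem_singleton, not_or] at hcU hdU heU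
  refine ⟨![a, b, c, d, e], ?_, ?_, ?_⟩
  · intro i j hij
    fin_cases i <;> fin_cases j <;> simp at hij ⊢ <;> grind
  · intro i
    fin_cases i <;> simp <;> apply hTS <;> assumption
  · intro i
    fin_cases i <;> simp [Fin.succ, Fin.castSucc] <;> assumption

/-- The bisector of two distinct points of `F⁵` has at most `q⁴` points: the difference of the
two quadratic equations is linear with nonzero coefficient `2(y'ᵢ - yᵢ)` at some coordinate `i`,
so the other four coordinates determine the point. -/
lemma card_bisector_le {F : Type*} [Field F] [Fintype F] [DecidableEq F] (h2 : (2 : F) ≠ 0)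
    (y y' : Fin 5 → F) (hne : y ≠ y') :
    (Finset.univ.filter (fun x => norm2 (x - y) = norm2 (x - y'))).card
      ≤ Fintype.card F ^ 4 := by
  obtain ⟨i, hi⟩ := Function.ne_iff.mp hne
  have hcard : (Finset.univ : Finset (Fin 4 → F)).card = Fintype.card F ^ 4 := by simp
  rw [← hcard]
  apply Finset.card_le_card_of_injOn (fun x j => x (i.succAbove j)) (by simp)
  intro x hx x' hx' hxx
  have hoff : ∀ j, x (i.succAbove j) = x' (i.succAbove j) := fun j => congrFun hxx j
  simp only [Finset.coe_filter, Finset.mem_univ, true_and, Set.mem_ofPred_eq, norm2,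
    Fin.sum_univ_succAbove _ i, Pi.sub_apply] at hx hx'
  simp only [hoff] at hx
  have heq : x i = x' i := by
    have : (2 : F) * (y i - y' i) * (x i - x' i) = 0 := by linear_combination hx' - hx
    rcases mul_eq_zero.mp this with h | h
    · exact absurd h (mul_ne_zero h2 (sub_ne_zero.mpr hi))
    · exact sub_eq_zero.mp h
  funext k
  rcases Fin.eq_self_or_eq_succAbove i k with rfl | ⟨j, rfl⟩
  · exact heq
  · exact hoff j

/-- The number of `y ∈ 𝓔` at distance `t` from `x`. -/
def distDeg {F : Type*} [Field F] [DecidableEq F] (𝓔 : Finset (Fin 5 → F))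
    (x : Fin 5 → F) (t : F) : ℕ :=
  (𝓔.filter (fun y => norm2 (x - y) = t)).card

lemma sum_distDeg {F : Type*} [Field F] [Fintype F] [DecidableEq F]
    (𝓔 : Finset (Fin 5 → F)) (x : Fin 5 → F) : ∑ t, distDeg 𝓔 x t = 𝓔.card :=
  (Finset.card_eq_sum_card_fiberwise (fun _ _ => by simp)).symm

/-- `∑ N(x,t)²` counts the triples `(x,y,y')` with `x` on the bisector of `y, y' ∈ 𝓔`. -/
lemma sum_distDeg_sq_le {F : Type*} [Field F] [Fintype F] [DecidableEq F] (h2 : (2 : F) ≠ 0)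
    (𝓔 : Finset (Fin 5 → F)) :
    ∑ x, ∑ t, distDeg 𝓔 x t ^ 2
      ≤ 𝓔.card * Fintype.card F ^ 5 + 𝓔.card ^ 2 * Fintype.card F ^ 4 := by
  have h1 : ∀ x : Fin 5 → F, ∑ t, distDeg 𝓔 x t ^ 2
      = ∑ y ∈ 𝓔, ∑ y' ∈ 𝓔, if norm2 (x - y) = norm2 (x - y') then 1 else 0 := by
    intro x
    simp only [distDeg, Finset.card_filter, sq, Finset.sum_mul_sum]
    rw [Finset.sum_comm]
    refine Finset.sum_congr rfl fun y _ => ?_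
    rw [Finset.sum_comm]
    refine Finset.sum_congr rfl fun y' _ => ?_
    simp [eq_comm]
  simp only [h1]
  rw [Finset.sum_comm]
  have h3 : ∀ y ∈ 𝓔, ∑ x : Fin 5 → F, ∑ y' ∈ 𝓔,
      (if norm2 (x - y) = norm2 (x - y') then 1 else 0)
      ≤ Fintype.card F ^ 5 + 𝓔.card * Fintype.card F ^ 4 := by
    intro y hy
    rw [Finset.sum_comm]
    simp only [← Finset.card_filter]
    rw [← Finset.add_sum_erase _ _ hy]
    refine add_le_add (by simp) ?_
    refine (Finset.sum_le_card_nsmul _ _ (Fintype.card F ^ 4) fun y' hy' =>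
      card_bisector_le h2 y y' (Finset.ne_of_mem_erase hy').symm).trans ?_
    rw [smul_eq_mul]
    exact Nat.mul_le_mul_right _ (Finset.card_le_card (Finset.erase_subset _ _))
  refine (Finset.sum_le_card_nsmul _ _ _ h3).trans (le_of_eq ?_)
  rw [smul_eq_mul]; ring

lemma variance_le {F : Type*} [Field F] [Fintype F] [DecidableEq F] (h2 : (2 : F) ≠ 0)
    (𝓔 : Finset (Fin 5 → F)) :
    ∑ x, ∑ t, ((distDeg 𝓔 x t : ℝ) - 𝓔.card / Fintype.card F) ^ 2
      ≤ 𝓔.card * (Fintype.card F : ℝ) ^ 5 := by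
  have hq : (Fintype.card F : ℝ) ≠ 0 := by exact_mod_cast Fintype.card_ne_zero
  have hsq : ∑ x, ∑ t, (distDeg 𝓔 x t : ℝ) ^ 2
      ≤ 𝓔.card * (Fintype.card F : ℝ) ^ 5 + (𝓔.card : ℝ) ^ 2 * (Fintype.card F : ℝ) ^ 4 := by
    exact_mod_cast sum_distDeg_sq_le h2 𝓔
  have hs : ∀ x : Fin 5 → F, ∑ t, (distDeg 𝓔 x t : ℝ) = 𝓔.card := fun x => by
    exact_mod_cast sum_distDeg 𝓔 x
  have : ∑ x, ∑ t, ((distDeg 𝓔 x t : ℝ) - 𝓔.card / Fintype.card F) ^ 2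
      = ∑ x, ∑ t, (distDeg 𝓔 x t : ℝ) ^ 2 - (𝓔.card : ℝ) ^ 2 * (Fintype.card F : ℝ) ^ 4 := by
    simp only [sub_sq, Finset.sum_add_distrib, Finset.sum_sub_distrib, ← Finset.sum_mul,
      ← Finset.mul_sum, hs]
    simp only [Finset.sum_const, Finset.card_univ, Fintype.card_pi, Finset.prod_const,
      Fintype.card_fin, nsmul_eq_mul]
    push_cast
    field_simp
    ring
  linarith

/-- If every `t ∈ B` has at most `6|𝓔|` ordered pairs of `𝓔` at distance `t`, then `B` is small:
this is Cauchy–Schwarz for `N(x,t) - |𝓔|/q` over `𝓔 × B`. -/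
lemma card_bad_le {F : Type*} [Field F] [Fintype F] [DecidableEq F] (h2 : (2 : F) ≠ 0)
    (𝓔 : Finset (Fin 5 → F)) (hcard : 12 * Fintype.card F ^ 3 ≤ 𝓔.card) (B : Finset F)
    (hB : ∀ t ∈ B, ∑ x ∈ 𝓔, distDeg 𝓔 x t ≤ 6 * 𝓔.card) :
    121 * B.card ≤ Fintype.card F := by
  set q : ℝ := (Fintype.card F : ℝ) with hqdef
  set e : ℝ := (𝓔.card : ℝ) with hedef
  set b : ℝ := (B.card : ℝ) with hbdef
  have hq1 : (1 : ℝ) ≤ q := by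
    rw [hqdef]; exact_mod_cast Fintype.card_pos
  have he : 12 * q ^ 3 ≤ e := by rw [hqdef, hedef]; exact_mod_cast hcard
  have hb0 : 0 ≤ b := Nat.cast_nonneg _
  have hq0 : 0 < q := by linarith
  have he0 : 0 < e := lt_of_lt_of_le (by positivity) he
  have hvar := variance_le h2 𝓔
  rw [← hqdef, ← hedef] at hvar
  have hsub : ∑ p ∈ 𝓔 ×ˢ B, (e / q - (distDeg 𝓔 p.1 p.2 : ℝ)) ^ 2 ≤ e * q ^ 5 := by
    refine le_trans ?_ hvar
    rw [← Fintype.sum_prod_type']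
    refine (Finset.sum_le_sum_of_subset_of_nonneg (Finset.subset_univ _)
      fun _ _ _ => sq_nonneg _).trans (le_of_eq ?_)
    exact Finset.sum_congr rfl fun p _ => by ring
  have hcs := sq_sum_le_card_mul_sum_sq (s := 𝓔 ×ˢ B)
    (f := fun p => e / q - (distDeg 𝓔 p.1 p.2 : ℝ))
  rw [Finset.card_product, Nat.cast_mul, ← hedef, ← hbdef] at hcs
  have hlow : b * (11 * q ^ 2 * e) ≤ ∑ p ∈ 𝓔 ×ˢ B, (e / q - (distDeg 𝓔 p.1 p.2 : ℝ)) := by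
    rw [Finset.sum_product_right, hbdef, ← nsmul_eq_mul]
    refine Finset.card_nsmul_le_sum _ _ _ fun t ht => ?_
    have h6 : ∑ x ∈ 𝓔, (distDeg 𝓔 x t : ℝ) ≤ 6 * e := by
      rw [hedef]; exact_mod_cast hB t ht
    rw [Finset.sum_sub_distrib, Finset.sum_const, nsmul_eq_mul, ← hedef]
    have h12 : 12 * q ^ 2 ≤ e / q := by
      rw [le_div_iff₀ hq0]; linarith [he, (by ring : 12 * q ^ 2 * q = 12 * q ^ 3)]
    -- For `q ≥ 3` the error `6` is absorbed by `q²`.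
    have hq3 : (3 : ℝ) ≤ q := by
      have hlt : 1 < Fintype.card F := Fintype.one_lt_card
      have hne2 : Fintype.card F ≠ 2 := by
        intro hc
        apply h2
        have := Nat.cast_card_eq_zero F
        rw [hc] at this
        exact_mod_cast this
      rw [hqdef]
      exact_mod_cast (by omega : 3 ≤ Fintype.card F)
    nlinarith [mul_le_mul_of_nonneg_left h12 he0.le,
      mul_le_mul_of_nonneg_left (show (6 : ℝ) ≤ q ^ 2 by nlinarith) he0.le]
  have hfin : (b * (11 * q ^ 2 * e)) ^ 2 ≤ e * b * (e * q ^ 5) :=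
    (pow_le_pow_left₀ (by positivity) hlow 2).trans
      (hcs.trans (mul_le_mul_of_nonneg_left hsub (by positivity)))
  have hres : 121 * b ≤ q := by
    rcases hb0.eq_or_lt with h0 | hpos
    · rw [← h0]; linarith
    · have hP : 0 < b * e ^ 2 * q ^ 4 := by positivity
      refine le_of_mul_le_mul_left ?_ hP
      linarith [hfin, (by ring : (b * (11 * q ^ 2 * e)) ^ 2 = b * e ^ 2 * q ^ 4 * (121 * b)),
        (by ring : e * b * (e * q ^ 5) = b * e ^ 2 * q ^ 4 * q)]
  rw [hbdef, hqdef] at hres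
  exact_mod_cast hres

lemma norm2_sub_comm {F : Type*} [Field F] {d : ℕ} (x y : Fin d → F) :
    norm2 (x - y) = norm2 (y - x) :=
  Finset.sum_congr rfl fun i _ => by simp only [Pi.sub_apply]; ring

/-- Let `q` be an odd prime power and let `r` be a nonzero square in `F_q`.
If `𝓔 ⊆ F_q^5` has size at least `12·q^3`, then `𝓔` contains a pair of `4`-paths
with dilation ratio `r`. -/
theorem paths_dim_five {F : Type*} [Field F] [Fintype F]
    (hodd : Odd (Fintype.card F))
    {r : F} (hr : r ≠ 0) (hrsq : IsSquare r)
    (𝓔 : Finset (Fin 5 → F))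
    (hcard : 12 * Fintype.card F ^ 3 ≤ 𝓔.card) :
    ContainsPairOfPaths 𝓔 4 r := by
  classical
  have h2 : (2 : F) ≠ 0 := Ring.two_ne_zero fun h =>
    Nat.not_even_iff_odd.mpr hodd
      (Nat.even_iff.mpr (FiniteField.even_card_of_char_two h))
  let G : Finset F := Finset.univ.filter fun t => 6 * 𝓔.card < ∑ x ∈ 𝓔, distDeg 𝓔 x t
  have hpath : ∀ t ∈ G, t ≠ 0 → ∃ x : Fin 5 → (Fin 5 → F), Function.Injective x ∧
      (∀ i, x i ∈ 𝓔) ∧ ∀ i : Fin 4, norm2 (x i.succ - x i.castSucc) = t := by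
    intro t ht ht0
    obtain ⟨x, hx, hxE, hxR⟩ := exists_path (fun x y : Fin 5 → F => norm2 (x - y) = t)
      (fun a b h => by rw [norm2_sub_comm]; exact h)
      (fun a h => ht0 (by rw [← h]; simp [norm2])) 𝓔 (Finset.mem_filter.mp ht).2
    exact ⟨x, hx, hxE, fun i => by rw [norm2_sub_comm]; exact hxR i⟩
  have hbad := card_bad_le h2 𝓔 hcard Gᶜ fun t ht => by simpa [G] using ht
  obtain ⟨t, ht⟩ : ∃ t, t ∉ insert 0 (Gᶜ ∪ Gᶜ.image (fun s => s / r)) := by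
    have hlt : 1 < Fintype.card F := Fintype.one_lt_card
    have hc := Finset.card_insert_le 0 (Gᶜ ∪ Gᶜ.image (fun s => s / r))
    have hu := Finset.card_union_le Gᶜ (Gᶜ.image (fun s => s / r))
    have hi := Finset.card_image_le (s := Gᶜ) (f := fun s => s / r)
    obtain ⟨t, -, ht⟩ := exists_new Finset.univ (insert 0 (Gᶜ ∪ Gᶜ.image (fun s => s / r)))
      (by rw [Finset.card_univ]; omega)
    exact ⟨t, ht⟩
  simp only [Finset.mem_insert, Finset.mem_union, Finset.mem_image, not_or, not_exists, not_and,
    Finset.mem_compl, not_not] at ht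
  obtain ⟨ht0, htG, htr⟩ := ht
  have hrt : r * t ∈ G := by
    by_contra hn
    exact htr (r * t) hn (by field_simp)
  obtain ⟨x, hx, hxE, hxt⟩ := hpath t htG ht0
  obtain ⟨y, hy, hyE, hyt⟩ := hpath (r * t) hrt (mul_ne_zero hr ht0)
  refine ⟨x, y, hx, hy, hxE, hyE, fun i => ?_⟩
  rw [hxt, hyt]
  exact ⟨rfl, mul_ne_zero hr ht0⟩
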